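/- Exhaustive application of the pure literal rule is symmetry-preserving: if F* is obtained from a CNF formula F by exhaustively applying the pure rule, then Aut_syn(F)_{{Lit(F*)}} = Aut_syn(F) and Aut_syn(F)↓_{Lit(F*)} ⊆ Aut_syn(F*). -/

import Mathlib

/-- A literal over a variable type `V`: a variable or its negation. -/
inductive Lit (V : Type) where
  | pos : V → Lit V
  | neg : V → Lit V
deriving DecidableEq

variable {V : Type} [DecidableEq V]

/-- Negation of a literal (so that double negation is the identity). -/
def Lit.negate : Lit V → Lit V
  | .pos v => .neg v
  | .neg v => .pos v

/-- The underlying variable of a literal. -/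
def Lit.var : Lit V → V
  | .pos v => v
  | .neg v => v

/-- A clause is a finite set of literals. -/
abbrev Clause (V : Type) := Finset (Lit V)

/-- A CNF formula is a finite set of clauses. -/
abbrev CNF (V : Type) := Finset (Clause V)

/-- `Var(F)`: the variables occurring in a formula. -/
def CNF.vars (F : CNF V) : Finset V := Finset.sup F (fun C => Finset.image Lit.var C)

/-- `Lit(F) = Var(F) ∪ {v̄ : v ∈ Var(F)}`. -/
def CNF.lits (F : CNF V) : Finset (Lit V) :=
  Finset.image Lit.pos (CNF.vars F) ∪ Finset.image Lit.neg (CNF.vars F)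

/-- The value of a literal under a complete assignment (given on the variables,
which determines a consistent complete assignment on all literals). -/
def Lit.val (σ : V → Bool) : Lit V → Bool
  | .pos v => σ v
  | .neg v => !(σ v)

/-- `C[σ]`: delete from `C` every literal mapped to `⊥` by `σ`
(i.e. keep `l` with `¬l ∉ σ`). -/
def Clause.reduce (σ : V → Bool) (C : Clause V) : Clause V :=
  Finset.filter (fun l => Lit.val σ (Lit.negate l) = false) C

/-- `F[σ]`: delete every clause containing a literal mapped to `⊤` by `σ`
(for a complete assignment: every clause containing no false literal is kept)
and delete from each remaining clause every literal mapped to `⊥`. -/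
def CNF.reduce (F : CNF V) (σ : V → Bool) : CNF V :=
  Finset.image (Clause.reduce σ) (Finset.filter (fun C => ∀ l ∈ C, Lit.val σ l = false) F)

/-- Apply a map on literals elementwise to clauses and formulas. -/
def CNF.map (φ : Lit V → Lit V) (F : CNF V) : CNF V :=
  Finset.image (fun C => Finset.image φ C) F

/-- `φ` is a syntactic symmetry of `F`: a bijection of `Lit(F)` respecting
negation with `φ(F) = F`. -/
def IsSynSym (F : CNF V) (φ : Lit V → Lit V) : Prop :=
  Set.BijOn φ (CNF.lits F : Set (Lit V)) (CNF.lits F : Set (Lit V)) ∧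
  (∀ l ∈ CNF.lits F, φ (Lit.negate l) = Lit.negate (φ l)) ∧
  CNF.map φ F = F

/-- `φ` is a semantic symmetry of `F`: a bijection of `Lit(F)` respecting
negation with `F[σ] = φ(F)[σ]` for every complete assignment `σ`. -/
def IsSemSym (F : CNF V) (φ : Lit V → Lit V) : Prop :=
  Set.BijOn φ (CNF.lits F : Set (Lit V)) (CNF.lits F : Set (Lit V)) ∧
  (∀ l ∈ CNF.lits F, φ (Lit.negate l) = Lit.negate (φ l)) ∧
  ∀ σ : V → Bool, CNF.reduce F σ = CNF.reduce (CNF.map φ F) σ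

/-- Extend a map defined on the literal set `S` by the identity outside `S`. -/
def extendId (S : Finset (Lit V)) (φ : Lit V → Lit V) : Lit V → Lit V :=
  fun l => if l ∈ S then φ l else l

/-- `F[l ↦ ⊤]`: delete every clause containing `l` and delete `l̄` from every
remaining clause. -/
def CNF.assignTrue (F : CNF V) (l : Lit V) : CNF V :=
  Finset.image (fun C => Finset.erase C (Lit.negate l)) (Finset.filter (fun C => l ∉ C) F)

/-- One application of the pure literal rule: if `l ∈ Lit(F)` and no clause of
`F` contains `l̄`, replace `F` by `F[l ↦ ⊤]`. -/
def PureStep (F F' : CNF V) : Prop :=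
  ∃ l : Lit V, l ∈ CNF.lits F ∧ (∀ C ∈ F, Lit.negate l ∉ C) ∧ F' = CNF.assignTrue F l

theorem negate_negate' (l : Lit V) : Lit.negate (Lit.negate l) = l := by
  cases l <;> rfl

theorem mem_lits_iff (F : CNF V) (l : Lit V) :
    l ∈ CNF.lits F ↔ ∃ C ∈ F, l ∈ C ∨ Lit.negate l ∈ C := by
  have hv : ∀ v, v ∈ CNF.vars F ↔ ∃ C ∈ F, Lit.pos v ∈ C ∨ Lit.neg v ∈ C := by
    intro v
    simp only [CNF.vars, Finset.mem_sup, Finset.mem_image]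
    constructor
    · rintro ⟨C, hC, k, hk, rfl⟩
      refine ⟨C, hC, ?_⟩
      cases k
      · exact Or.inl hk
      · exact Or.inr hk
    · rintro ⟨C, hC, h | h⟩
      · exact ⟨C, hC, _, h, rfl⟩
      · exact ⟨C, hC, _, h, rfl⟩
  cases l with
  | pos v => simp [CNF.lits, hv, Lit.negate]
  | neg v => simp [CNF.lits, hv, Lit.negate, or_comm]

def FullCNF (G : CNF V) : Prop := ∀ C ∈ G, ∀ l ∈ C, ∃ D ∈ G, Lit.negate l ∈ D

theorem pureStep_filter {F F' : CNF V} (h : PureStep F F') :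
    F' ⊆ F ∧ ∀ G : CNF V, FullCNF G → G ⊆ F → G ⊆ F' := by
  obtain ⟨l, -, hl, rfl⟩ := h
  constructor
  · intro C hC
    simp only [CNF.assignTrue, Finset.mem_image, Finset.mem_filter] at hC
    obtain ⟨D, ⟨hD, -⟩, rfl⟩ := hC
    rw [Finset.erase_eq_of_notMem (hl D hD)]
    exact hD
  · intro G hG hGF C hC
    simp only [CNF.assignTrue, Finset.mem_image, Finset.mem_filter]
    refine ⟨C, ⟨hGF hC, fun hlC => ?_⟩, Finset.erase_eq_of_notMem (hl C (hGF hC))⟩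
    obtain ⟨D, hD, hlD⟩ := hG C hC l hlC
    exact hl D (hGF hD) hlD

theorem steps_filter {F Fs : CNF V} (h : Relation.ReflTransGen PureStep F Fs) :
    Fs ⊆ F ∧ ∀ G : CNF V, FullCNF G → G ⊆ F → G ⊆ Fs := by
  induction h with
  | refl => exact ⟨fun _ h => h, fun _ _ h => h⟩
  | tail _ hs ih =>
    have := pureStep_filter hs
    exact ⟨this.1.trans ih.1, fun G hG hF => this.2 G hG (ih.2 G hG hF)⟩

theorem map_core {F Fs : CNF V}
    (hsteps : Relation.ReflTransGen PureStep F Fs)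
    (hfull : FullCNF Fs) {φ : Lit V → Lit V} (hφ : IsSynSym F φ) :
    CNF.map φ Fs = Fs := by
  obtain ⟨hsub, hmax⟩ := steps_filter hsteps
  obtain ⟨hb, hn, hm⟩ := hφ
  apply Finset.eq_of_subset_of_card_le
  · apply hmax
    · intro C hC l hl
      simp only [CNF.map, Finset.mem_image] at hC
      obtain ⟨C, hC, rfl⟩ := hC
      obtain ⟨k, hk, rfl⟩ := Finset.mem_image.1 hl
      obtain ⟨D, hD, hkD⟩ := hfull C hC k hk
      refine ⟨Finset.image φ D, Finset.mem_image_of_mem _ hD, ?_⟩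
      rw [← hn k ((mem_lits_iff F k).2 ⟨C, hsub hC, Or.inl hk⟩)]
      exact Finset.mem_image_of_mem _ hkD
    · have : CNF.map φ Fs ⊆ CNF.map φ F := Finset.image_subset_image hsub
      rwa [hm] at this
  · rw [CNF.map, Finset.card_image_of_injOn]
    have key : ∀ C ∈ Fs, ∀ D ∈ Fs, Finset.image φ C = Finset.image φ D → C ⊆ D := by
      intro C hC D hD h l hl
      have h1 : φ l ∈ Finset.image φ D := h ▸ Finset.mem_image_of_mem _ hl
      obtain ⟨k, hk, hkl⟩ := Finset.mem_image.1 h1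
      have := hb.injOn (Finset.mem_coe.2 ((mem_lits_iff F k).2 ⟨D, hsub hD, Or.inl hk⟩))
        (Finset.mem_coe.2 ((mem_lits_iff F l).2 ⟨C, hsub hC, Or.inl hl⟩)) hkl
      exact this ▸ hk
    intro C hC D hD h
    exact Finset.Subset.antisymm (key C hC D hD h) (key D hD C hC h.symm)

/-- Exhaustive application of the pure literal rule is
symmetry-preserving: if `F*` is obtained from `F` by exhaustively applying
the pure rule, then every syntactic symmetry of `F` setwise stabilizes
`Lit(F*)` (so `Aut_syn(F)_{{Lit(F*)}} = Aut_syn(F)`) and its restriction to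
`Lit(F*)` is a syntactic symmetry of `F*`
(so `Aut_syn(F)↓_{Lit(F*)} ⊆ Aut_syn(F*)`). -/
theorem exhaustive_pure_symmetry_preserving (F Fs : CNF V)
    (hsteps : Relation.ReflTransGen PureStep F Fs)
    (hdone : ¬ ∃ l : Lit V, l ∈ CNF.lits Fs ∧ ∀ C ∈ Fs, Lit.negate l ∉ C) :
    (∀ φ : Lit V → Lit V, IsSynSym F φ →
        φ '' (CNF.lits Fs : Set (Lit V)) = (CNF.lits Fs : Set (Lit V))) ∧
    (∀ φ : Lit V → Lit V, IsSynSym F φ →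
        φ '' (CNF.lits Fs : Set (Lit V)) = (CNF.lits Fs : Set (Lit V)) →
        IsSynSym Fs φ) := by
  have hfull : FullCNF Fs := by
    intro C hC l hl
    by_contra hcon
    push Not at hcon
    exact hdone ⟨l, (mem_lits_iff Fs l).2 ⟨C, hC, Or.inl hl⟩, hcon⟩
  have hlits : ∀ l, l ∈ CNF.lits Fs ↔ ∃ C ∈ Fs, l ∈ C := by
    intro l
    rw [mem_lits_iff]
    constructor
    · rintro ⟨C, hC, h | h⟩
      · exact ⟨C, hC, h⟩
      · simpa [negate_negate'] using hfull C hC _ h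
    · rintro ⟨C, hC, h⟩
      exact ⟨C, hC, Or.inl h⟩
  have hsub := (steps_filter hsteps).1
  have hlsub : ∀ l, l ∈ CNF.lits Fs → l ∈ CNF.lits F := by
    intro l hl
    obtain ⟨C, hC, h⟩ := (mem_lits_iff Fs l).1 hl
    exact (mem_lits_iff F l).2 ⟨C, hsub hC, h⟩
  constructor
  · intro φ hφ
    have hm := map_core hsteps hfull hφ
    ext l
    simp only [Set.mem_image, Finset.mem_coe, hlits]
    constructor
    · rintro ⟨k, ⟨C, hC, hk⟩, rfl⟩
      refine ⟨Finset.image φ C, ?_, Finset.mem_image_of_mem _ hk⟩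
      rw [← hm]
      exact Finset.mem_image_of_mem _ hC
    · rintro ⟨C, hC, hl⟩
      rw [← hm] at hC
      obtain ⟨D, hD, rfl⟩ := Finset.mem_image.1 hC
      obtain ⟨k, hk, rfl⟩ := Finset.mem_image.1 hl
      exact ⟨k, ⟨D, hD, hk⟩, rfl⟩
  · intro φ hφ himg
    refine ⟨⟨?_, ?_, himg.ge⟩, fun l hl => hφ.2.1 l (hlsub l hl), map_core hsteps hfull hφ⟩
    · intro l hl
      rw [← himg]
      exact Set.mem_image_of_mem _ hl
    · exact hφ.1.injOn.mono (fun l hl => hlsub l hl)
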